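/- The set of critical points of P_5 over ℂ, i.e. the set of pairs (a,b) ∈ ℂ² at which both partial derivatives ∂P_5/∂x_1 and ∂P_5/∂x_2 vanish, is exactly the union of the following five families: {(a,a) : a² = a + 1}, {(a+1,a+1) : a² = a + 1}, {(−ζ, −ζ⁴) : ζ⁴+ζ³+ζ²+ζ+1 = 0}, {(ζ−ζ⁴−1, ζ⁴−ζ−1) : ζ⁴+ζ³+ζ²+ζ+1 = 0}, and {(a·ω, a·ω²) : a² = a + 1 and ω² + ω + 1 = 0}. In particular P_5 has exactly 16 critical points, all non-degenerate families as listed. -/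

import Mathlib

/-!
Up to the factor `5`, the partial derivatives of `P5` at `(x, y)` are
`F = x⁴ - 3x²y - y³ + 2xy + y² + 2x - 1` and its mirror image `G`. Put `s = x + y` and `p = xy`. Then
`F - G = (x - y)(s + 2)(s² - s + 1 - 2p)` and
`F + G = s⁴ - 4s²p + 2p² - s³ + s² + 2p + 2s - 2`.
On the diagonal `F = (x² - x - 1)(x² - 3x + 1)`, which gives the first two families. If `s = -2`, then
`F + G = 2(p² - 7p + 11)`, which gives the fourth family. If `2p = s² - s + 1`, then
`2(F + G) = -(s² - s - 1)(s² + s - 1)`; the first factor forces `p = 1` (third family) and the second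
forces `p = s²` (fifth family).

For the count, the families are injective images of the sets of roots of `a² - a - 1`,
of `Φ₅`, and of pairs of roots of `a² - a - 1` and `Φ₃`, so they have `2, 2, 4, 4, 4` elements. They are
pairwise disjoint: the first two are the only diagonal ones and share no point, and the other three
have `s² = s + 1`, `s = -2` and `s² = 1 - s` respectively.
-/

open MvPolynomial

/-- The degree-5 generalized Chebyshev polynomial `P_5(x_1,x_2)` as a polynomial
in two variables with complex coefficients. -/
noncomputable def P5 : MvPolynomial (Fin 2) ℂ :=
  X 0 ^ 5 + X 1 ^ 5 - 5 * X 0 * X 1 * (X 0 ^ 2 + X 1 ^ 2)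
    + 5 * X 0 * X 1 * (X 0 + X 1) + 5 * (X 0 ^ 2 + X 1 ^ 2) - 5 * (X 0 + X 1)

/-- `(a,b) ∈ ℂ²` is a critical point of `P_5` if both formal partial derivatives
of `P_5` vanish at `(a,b)`. -/
def IsCriticalPoint (p : ℂ × ℂ) : Prop :=
  eval ![p.1, p.2] (pderiv 0 P5) = 0 ∧ eval ![p.1, p.2] (pderiv 1 P5) = 0

theorem isCriticalPoint_iff (x y : ℂ) : IsCriticalPoint (x, y) ↔
    x ^ 4 - 3 * x ^ 2 * y - y ^ 3 + 2 * x * y + y ^ 2 + 2 * x - 1 = 0 ∧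
    y ^ 4 - 3 * y ^ 2 * x - x ^ 3 + 2 * x * y + x ^ 2 + 2 * y - 1 = 0 := by
  have h5 (n : Fin 2) : pderiv n (5 : MvPolynomial (Fin 2) ℂ) = 0 := by
    exact (pderiv n).map_natCast 5
  have e0 : eval ![x, y] (pderiv 0 P5) =
      5 * (x ^ 4 - 3 * x ^ 2 * y - y ^ 3 + 2 * x * y + y ^ 2 + 2 * x - 1) := by
    simp [P5, pderiv_X, h5]
    ring
  have e1 : eval ![x, y] (pderiv 1 P5) =
      5 * (y ^ 4 - 3 * y ^ 2 * x - x ^ 3 + 2 * x * y + x ^ 2 + 2 * y - 1) := by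
    simp [P5, pderiv_X, h5]
    ring
  simp [IsCriticalPoint, e0, e1]

/-- The roots of `a² - a - 1`. -/
def goldenRoots : Set ℂ := {a | a ^ 2 = a + 1}

/-- The roots of the cyclotomic polynomial `Φ₅`. -/
def fifthRoots : Set ℂ := {ζ | ζ ^ 4 + ζ ^ 3 + ζ ^ 2 + ζ + 1 = 0}

/-- The roots of the cyclotomic polynomial `Φ₃`. -/
def cubeRoots : Set ℂ := {ω | ω ^ 2 + ω + 1 = 0}

theorem ncard_goldenRoots : goldenRoots.ncard = 2 := by
  obtain ⟨r, hr⟩ := IsAlgClosed.exists_pow_nat_eq (5 : ℂ) (n := 2) (by norm_num)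
  have hA : goldenRoots = {(1 + r) / 2, (1 - r) / 2} := by
    ext a
    simp only [goldenRoots, Set.mem_ofPred_eq, Set.mem_insert_iff, Set.mem_singleton_iff]
    constructor
    · intro h
      have : (a - (1 + r) / 2) * (a - (1 - r) / 2) = 0 := by linear_combination h - hr / 4
      simpa [sub_eq_zero] using this
    · rintro (rfl | rfl) <;> linear_combination hr / 4
  rw [hA, Set.ncard_pair]
  intro h
  have h0 : r = 0 := by linear_combination h
  simp [h0] at hr

theorem ncard_fifthRoots : fifthRoots.ncard = 4 := by
  have h : fifthRoots = (primitiveRoots 5 ℂ : Set ℂ) := by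
    ext z
    have : Fact (Nat.Prime 5) := ⟨by norm_num⟩
    rw [Finset.mem_coe, mem_primitiveRoots (by norm_num), ← Polynomial.isRoot_cyclotomic_iff,
      Polynomial.cyclotomic_prime]
    simp only [fifthRoots, Set.mem_ofPred_eq, Polynomial.IsRoot.def, Finset.sum_range_succ]
    simp
    constructor <;> intro h <;> linear_combination h
  rw [h, Set.ncard_coe_finset, Complex.card_primitiveRoots]
  decide

theorem ncard_cubeRoots : cubeRoots.ncard = 2 := by
  have h : cubeRoots = (primitiveRoots 3 ℂ : Set ℂ) := by
    ext z
    have : Fact (Nat.Prime 3) := ⟨by norm_num⟩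
    rw [Finset.mem_coe, mem_primitiveRoots (by norm_num), ← Polynomial.isRoot_cyclotomic_iff,
      Polynomial.cyclotomic_prime]
    simp only [cubeRoots, Set.mem_ofPred_eq, Polynomial.IsRoot.def, Finset.sum_range_succ]
    simp
    constructor <;> intro h <;> linear_combination h
  rw [h, Set.ncard_coe_finset, Complex.card_primitiveRoots]
  decide

theorem critical_cases {x y : ℂ}
    (hF : x ^ 4 - 3 * x ^ 2 * y - y ^ 3 + 2 * x * y + y ^ 2 + 2 * x - 1 = 0)
    (hG : y ^ 4 - 3 * y ^ 2 * x - x ^ 3 + 2 * x * y + x ^ 2 + 2 * y - 1 = 0) :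
    (∃ a ∈ goldenRoots, (a, a) = (x, y)) ∨ (∃ a ∈ goldenRoots, (a + 1, a + 1) = (x, y)) ∨
    (∃ ζ ∈ fifthRoots, (-ζ, -ζ ^ 4) = (x, y)) ∨
    (∃ ζ ∈ fifthRoots, (ζ - ζ ^ 4 - 1, ζ ^ 4 - ζ - 1) = (x, y)) ∨
    ∃ q ∈ goldenRoots ×ˢ cubeRoots, (q.1 * q.2, q.1 * q.2 ^ 2) = (x, y) := by
  have key : (x - y) * ((x + y + 2) * ((x + y) ^ 2 - (x + y) + 1 - 2 * (x * y))) = 0 := by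
    linear_combination hF - hG
  rcases mul_eq_zero.1 key with h | h
  · obtain rfl : x = y := sub_eq_zero.1 h
    have : (x ^ 2 - x - 1) * (x ^ 2 - 3 * x + 1) = 0 := by linear_combination hF
    rcases mul_eq_zero.1 this with h | h
    · exact Or.inl ⟨x, by simp only [goldenRoots, Set.mem_ofPred_eq]; linear_combination h, rfl⟩
    · exact Or.inr <| Or.inl ⟨x - 1,
        by simp only [goldenRoots, Set.mem_ofPred_eq]; linear_combination h, by simp⟩
  rcases mul_eq_zero.1 h with h | h
  · -- With `t = x + 1 = ζ - ζ⁴` one has `ζ + ζ⁴ = -3 - t²`, hence `ζ = (t - 3 - t²) / 2`.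
    obtain rfl : y = -2 - x := by linear_combination h
    obtain ⟨t, rfl⟩ : ∃ t, x = t - 1 := ⟨x + 1, by ring⟩
    have ht : t ^ 4 + 5 * t ^ 2 + 5 = 0 := by linear_combination (hF + hG) / 2
    have hz4 : ((t - 3 - t ^ 2) / 2) ^ 4 = (-t - 3 - t ^ 2) / 2 := by grind
    refine Or.inr <| Or.inr <| Or.inr <| Or.inl ⟨(t - 3 - t ^ 2) / 2, ?_, ?_⟩
    · simp only [fifthRoots, Set.mem_ofPred_eq]
      grind
    · rw [hz4]
      ext <;> simp only <;> ring
  · have h2 : ((x + y) ^ 2 - (x + y) - 1) * ((x + y) ^ 2 + (x + y) - 1) = 0 := by grind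
    rcases mul_eq_zero.1 h2 with h2 | h2
    · have hp : x * y = 1 := by linear_combination (h2 - h) / 2
      have hx : x ^ 4 - x ^ 3 + x ^ 2 - x + 1 = 0 := by grind
      have hy : y = -x ^ 4 := by grind
      refine Or.inr <| Or.inr <| Or.inl ⟨-x, ?_, ?_⟩
      · simp only [fifthRoots, Set.mem_ofPred_eq]
        linear_combination hx
      · rw [hy]
        ext <;> simp only <;> ring
    · -- Here `a = -s`, and `ω = x / a = -x (s + 1)` because `s (s + 1) = 1`.
      have hp : x * y = (x + y) ^ 2 := by linear_combination (-h - h2) / 2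
      refine Or.inr <| Or.inr <| Or.inr <| Or.inr ⟨(-(x + y), -x * (x + y + 1)), ⟨?_, ?_⟩, ?_⟩
      · simp only [goldenRoots, Set.mem_ofPred_eq]
        linear_combination h2
      · simp only [cubeRoots, Set.mem_ofPred_eq]
        grind
      · ext <;> simp only <;> grind

/-- The critical points of `P_5` over `ℂ` are exactly the five listed families,
and there are exactly 16 of them. -/
theorem critical_points_of_P5 :
    ({p : ℂ × ℂ | IsCriticalPoint p} =
      {p : ℂ × ℂ | ∃ a : ℂ, a ^ 2 = a + 1 ∧ p = (a, a)} ∪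
      {p : ℂ × ℂ | ∃ a : ℂ, a ^ 2 = a + 1 ∧ p = (a + 1, a + 1)} ∪
      {p : ℂ × ℂ | ∃ ζ : ℂ, ζ ^ 4 + ζ ^ 3 + ζ ^ 2 + ζ + 1 = 0 ∧ p = (-ζ, -ζ ^ 4)} ∪
      {p : ℂ × ℂ | ∃ ζ : ℂ, ζ ^ 4 + ζ ^ 3 + ζ ^ 2 + ζ + 1 = 0 ∧
        p = (ζ - ζ ^ 4 - 1, ζ ^ 4 - ζ - 1)} ∪
      {p : ℂ × ℂ | ∃ a ω : ℂ, a ^ 2 = a + 1 ∧ ω ^ 2 + ω + 1 = 0 ∧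
        p = (a * ω, a * ω ^ 2)}) ∧
    {p : ℂ × ℂ | IsCriticalPoint p}.ncard = 16 := by
  have hset : {p : ℂ × ℂ | IsCriticalPoint p} =
      (fun a : ℂ => (a, a)) '' goldenRoots ∪ ((fun a : ℂ => (a + 1, a + 1)) '' goldenRoots ∪
      ((fun ζ : ℂ => (-ζ, -ζ ^ 4)) '' fifthRoots ∪
      ((fun ζ : ℂ => (ζ - ζ ^ 4 - 1, ζ ^ 4 - ζ - 1)) '' fifthRoots ∪
      (fun q : ℂ × ℂ => (q.1 * q.2, q.1 * q.2 ^ 2)) '' (goldenRoots ×ˢ cubeRoots)))) := by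
    ext ⟨x, y⟩
    simp only [Set.mem_ofPred_eq, isCriticalPoint_iff, Set.mem_union, Set.mem_image]
    constructor
    · rintro ⟨hF, hG⟩
      exact critical_cases hF hG
    · simp only [goldenRoots, fifthRoots, cubeRoots, Set.mem_ofPred_eq, Set.mem_prod,
        Prod.exists, Prod.mk.injEq]
      rintro (⟨a, ha, rfl, rfl⟩ | ⟨a, ha, rfl, rfl⟩ | ⟨z, hz, rfl, rfl⟩ | ⟨z, hz, rfl, rfl⟩ |
        ⟨a, w, ⟨ha, hw⟩, rfl, rfl⟩)
      · constructor <;> grind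
      · constructor <;> grind
      · have h5 : z ^ 5 = 1 := by linear_combination (z - 1) * hz
        constructor <;> grind
      · have h5 : z ^ 5 = 1 := by linear_combination (z - 1) * hz
        constructor <;> grind
      · have h3 : w ^ 3 = 1 := by linear_combination (w - 1) * hw
        constructor <;> grind
  constructor
  · rw [hset]
    ext p
    simp only [Set.mem_union, Set.mem_image, Set.mem_ofPred_eq, goldenRoots, fifthRoots, cubeRoots,
      Set.mem_prod, Prod.exists, or_assoc, and_assoc, eq_comm (a := p)]
  have fA : goldenRoots.Finite := Set.finite_of_ncard_ne_zero (by simp [ncard_goldenRoots])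
  have fZ : fifthRoots.Finite := Set.finite_of_ncard_ne_zero (by simp [ncard_fifthRoots])
  have fW : cubeRoots.Finite := Set.finite_of_ncard_ne_zero (by simp [ncard_cubeRoots])
  have fAW := fA.prod fW
  have c1 : ((fun a : ℂ => (a, a)) '' goldenRoots).ncard = 2 := by
    rw [Set.InjOn.ncard_image, ncard_goldenRoots]
    intro a _ b _ h
    simpa using h
  have c2 : ((fun a : ℂ => (a + 1, a + 1)) '' goldenRoots).ncard = 2 := by
    rw [Set.InjOn.ncard_image, ncard_goldenRoots]
    intro a _ b _ h
    simpa using h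
  have c3 : ((fun ζ : ℂ => (-ζ, -ζ ^ 4)) '' fifthRoots).ncard = 4 := by
    rw [Set.InjOn.ncard_image, ncard_fifthRoots]
    intro a _ b _ h
    simp only [Prod.mk.injEq, neg_inj] at h
    exact h.1
  have c4 : ((fun ζ : ℂ => (ζ - ζ ^ 4 - 1, ζ ^ 4 - ζ - 1)) '' fifthRoots).ncard = 4 := by
    rw [Set.InjOn.ncard_image, ncard_fifthRoots]
    intro a ha b hb h
    simp only [Prod.mk.injEq] at h
    simp only [fifthRoots, Set.mem_ofPred_eq] at ha hb
    -- `ζ` is recovered from `t = ζ - ζ⁴` as `(t - 3 - t²) / 2`.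
    have e (z : ℂ) (hz : z ^ 4 + z ^ 3 + z ^ 2 + z + 1 = 0) :
        z = ((z - z ^ 4) - 3 - (z - z ^ 4) ^ 2) / 2 := by grind
    have ht : a - a ^ 4 = b - b ^ 4 := by linear_combination h.1
    rw [e a ha, e b hb, ht]
  have c5 : ((fun q : ℂ × ℂ => (q.1 * q.2, q.1 * q.2 ^ 2)) ''
      (goldenRoots ×ˢ cubeRoots)).ncard = 4 := by
    rw [Set.InjOn.ncard_image, Set.ncard_prod, ncard_goldenRoots, ncard_cubeRoots]
    rintro ⟨a, w⟩ ⟨ha, hw⟩ ⟨b, v⟩ ⟨hb, hv⟩ h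
    simp only [Prod.mk.injEq] at h
    simp only [goldenRoots, cubeRoots, Set.mem_ofPred_eq] at ha hw hb hv
    obtain rfl : a = b := by linear_combination a * hw - b * hv - h.1 - h.2
    have ha0 : a ≠ 0 := by
      rintro rfl
      simp at ha
    rw [mul_left_cancel₀ ha0 h.1]
  rw [hset, Set.ncard_union_eq ?_ (fA.image _)
      ((fA.image _).union ((fZ.image _).union ((fZ.image _).union (fAW.image _)))),
    Set.ncard_union_eq ?_ (fA.image _) ((fZ.image _).union ((fZ.image _).union (fAW.image _))),
    Set.ncard_union_eq ?_ (fZ.image _) ((fZ.image _).union (fAW.image _)),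
    Set.ncard_union_eq ?_ (fZ.image _) (fAW.image _), c1, c2, c3, c4, c5]
  all_goals
    rw [Set.disjoint_left]
    rintro ⟨x, y⟩
    simp only [Set.mem_union, Set.mem_image, Set.mem_prod, Prod.exists, Prod.mk.injEq,
      goldenRoots, fifthRoots, cubeRoots, Set.mem_ofPred_eq]
  · rintro ⟨z, hz, rfl, rfl⟩ ⟨a, w, ⟨ha, hw⟩, h1, h2⟩
    grind
  · rintro ⟨z, hz, rfl, rfl⟩ (⟨u, hu, h1, h2⟩ | ⟨a, w, ⟨ha, hw⟩, h1, h2⟩)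
    · grind
    · have hs : z + z ^ 4 = a := by linear_combination h1 + h2 - a * hw
      grind
  · rintro ⟨b, hb, rfl, rfl⟩ (⟨u, hu, h1, h2⟩ | ⟨u, hu, h1, h2⟩ | ⟨a, w, ⟨ha, hw⟩, h1, h2⟩)
    · grind
    · grind
    · grind
  · rintro ⟨b, hb, rfl, rfl⟩ (⟨a, ha, h1, h2⟩ | ⟨u, hu, h1, h2⟩ | ⟨u, hu, h1, h2⟩ |
      ⟨a, w, ⟨ha, hw⟩, h1, h2⟩)
    · grind
    · grind
    · grind
    · grind
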